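/- arXiv:1908.11340 — 4 statements merged into one kernel-verified Lean document; each statement's English description precedes it below -/
import Mathlib

section
/- Let μ be a (positive) measure on ℂ, let l be a natural number, and let f : ℂ → ℂ be measurable with ∫ |f(s)|(1 + |s|^l) dμ(s) < ∞. Let k ∈ ℂ, k ≠ 0, and ε > 0 be such that |s − k| ≥ ε|k| for μ-almost every s. Then | ∫ f(s)/(s − k) dμ(s) + Σ_{i=1}^{l} k^{-i} ∫ f(s) s^{i-1} dμ(s) | ≤ (ε |k|^{l+1})⁻¹ ∫ |f(s)| |s|^l dμ(s). -/
open MeasureTheory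

lemma neumann_trunc (s k : ℂ) (hk : k ≠ 0) (hs : s - k ≠ 0) (l : ℕ) :
    1 / (s - k) + ∑ i ∈ Finset.Icc 1 l, (k ^ i)⁻¹ * s ^ (i - 1) = s ^ l / (k ^ l * (s - k)) := by
  induction l with
  | zero => simp
  | succ n ih =>
    rw [Finset.sum_Icc_succ_top (by omega), ← add_assoc, ih, Nat.add_sub_cancel]
    field_simp
    ring

lemma pow_le_one_add_pow (x : ℝ) (hx : 0 ≤ x) (j l : ℕ) (h : j ≤ l) : x ^ j ≤ 1 + x ^ l := by
  rcases le_total x 1 with h1 | h1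
  · have := pow_le_one₀ (n := j) hx h1
    have := pow_nonneg hx l
    linarith
  · have := pow_le_pow_right₀ h1 h
    linarith


/-- Expansion of the Cauchy transform at infinity: if `∫ |f(s)|(1 + |s|^l) dμ < ∞` and
`|s - k| ≥ ε|k|` for `μ`-a.e. `s`, then truncating the Neumann series of `1/(s - k)` gives
`| ∫ f(s)/(s-k) dμ + ∑_{i=1}^{l} k⁻ⁱ ∫ f(s) s^{i-1} dμ | ≤ (ε |k|^{l+1})⁻¹ ∫ |f(s)||s|^l dμ`. -/
theorem cauchy_transform_expansion (μ : Measure ℂ) (l : ℕ) (f : ℂ → ℂ)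
    (hmeas : Measurable f)
    (hint : Integrable (fun s => ‖f s‖ * (1 + ‖s‖ ^ l)) μ)
    (k : ℂ) (hk : k ≠ 0) (ε : ℝ) (hε : 0 < ε)
    (hdist : ∀ᵐ s ∂μ, ε * ‖k‖ ≤ ‖s - k‖) :
    ‖(∫ s, f s / (s - k) ∂μ) +
        ∑ i ∈ Finset.Icc 1 l, (k ^ i)⁻¹ * ∫ s, f s * s ^ (i - 1) ∂μ‖ ≤
      (ε * ‖k‖ ^ (l + 1))⁻¹ * ∫ s, ‖f s‖ * ‖s‖ ^ l ∂μ := by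
  have hkn : 0 < ‖k‖ := norm_pos_iff.mpr hk
  have hpow : ∀ j ≤ l, Integrable (fun s => f s * s ^ j) μ := by
    intro j hj
    refine hint.mono' (by fun_prop) (Filter.Eventually.of_forall fun s => ?_)
    rw [norm_mul, norm_pow]
    exact mul_le_mul_of_nonneg_left (pow_le_one_add_pow _ (norm_nonneg _) j l hj) (norm_nonneg _)
  have hdiv : Integrable (fun s => f s / (s - k)) μ := by
    have h0 : Integrable (fun s => (ε * ‖k‖)⁻¹ * ‖f s * s ^ 0‖) μ :=
      (hpow 0 (Nat.zero_le _)).norm.const_mul _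
    refine h0.mono' (Measurable.aestronglyMeasurable (by fun_prop)) ?_
    filter_upwards [hdist] with s hs
    rw [norm_div, pow_zero, mul_one, div_eq_inv_mul]
    gcongr
  have hl : Integrable (fun s => ‖f s‖ * ‖s‖ ^ l) μ := by
    simpa [norm_mul, norm_pow] using (hpow l le_rfl).norm
  have hterm : ∀ i ∈ Finset.Icc 1 l,
      Integrable (fun s => (k ^ i)⁻¹ * (f s * s ^ (i - 1))) μ := by
    intro i hi
    have := Finset.mem_Icc.mp hi
    exact (hpow (i - 1) (by omega)).const_mul _
  have heq : (∫ s, f s / (s - k) ∂μ) +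
        ∑ i ∈ Finset.Icc 1 l, (k ^ i)⁻¹ * ∫ s, f s * s ^ (i - 1) ∂μ =
      ∫ s, (f s / (s - k) + ∑ i ∈ Finset.Icc 1 l, (k ^ i)⁻¹ * (f s * s ^ (i - 1))) ∂μ := by
    rw [integral_add hdiv (integrable_finsetSum _ hterm), integral_finsetSum _ hterm]
    simp_rw [integral_const_mul]
  rw [heq, ← integral_const_mul]
  refine norm_integral_le_of_norm_le (hl.const_mul _) ?_
  filter_upwards [hdist] with s hs
  have hpos : 0 < ε * ‖k‖ := by positivity
  have hsk : s - k ≠ 0 := norm_pos_iff.mp (lt_of_lt_of_le hpos hs)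
  have hid : f s / (s - k) + ∑ i ∈ Finset.Icc 1 l, (k ^ i)⁻¹ * (f s * s ^ (i - 1)) =
      f s * (s ^ l / (k ^ l * (s - k))) := by
    rw [← neumann_trunc s k hk hsk l, mul_add, Finset.mul_sum]
    congr 1
    · ring
    · exact Finset.sum_congr rfl fun i _ => by ring
  rw [hid, norm_mul, norm_div, norm_mul, norm_pow, norm_pow, div_eq_inv_mul]
  have h2 : (‖k‖ ^ l * ‖s - k‖)⁻¹ ≤ (ε * ‖k‖ ^ (l + 1))⁻¹ := by
    apply inv_anti₀ (by positivity)
    calc ε * ‖k‖ ^ (l + 1) = ‖k‖ ^ l * (ε * ‖k‖) := by ring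
      _ ≤ _ := by gcongr
  calc ‖f s‖ * ((‖k‖ ^ l * ‖s - k‖)⁻¹ * ‖s‖ ^ l)
      = (‖k‖ ^ l * ‖s - k‖)⁻¹ * (‖f s‖ * ‖s‖ ^ l) := by ring
    _ ≤ _ := by gcongr
end

section
/- Let A be a unital (not necessarily commutative) ring and let C₊, C₋ : A → A be additive maps satisfying C₊(a) = C₋(a) + a for all a ∈ A. Let u⁺, u⁻, m, φ ∈ A satisfy the singular integral equation φ = C₊(φu⁻ + m u⁻) + C₋(φu⁺ + m u⁺). Then m + C₊((φ + m)(u⁺ + u⁻)) = (m + φ)(1 + u⁺) and m + C₋((φ + m)(u⁺ + u⁻)) = (m + φ)(1 − u⁻). -/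
/-- Plemelj algebra: if `C₊, C₋` are additive maps on a unital ring with `C₊ = C₋ + id`, and
`φ = C₊(φu⁻ + mu⁻) + C₋(φu⁺ + mu⁺)` (the singular integral equation), then the boundary
values `m + C₊((φ + m)(u⁺ + u⁻))` and `m + C₋((φ + m)(u⁺ + u⁻))` equal
`(m + φ)(1 + u⁺)` and `(m + φ)(1 - u⁻)` respectively. -/
theorem boundary_values_of_sie {A : Type*} [Ring A] (Cp Cm : A →+ A)
    (hPlemelj : ∀ a : A, Cp a = Cm a + a)
    (up um m φ : A)
    (hφ : φ = Cp (φ * um + m * um) + Cm (φ * up + m * up)) :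
    m + Cp ((φ + m) * (up + um)) = (m + φ) * (1 + up) ∧
      m + Cm ((φ + m) * (up + um)) = (m + φ) * (1 - um) := by
  have key : Cm ((φ + m) * (up + um)) = φ - (φ + m) * um := by
    rw [hPlemelj, ← add_mul, ← add_mul] at hφ
    rw [mul_add, map_add, eq_sub_iff_add_eq]
    refine Eq.trans ?_ hφ.symm
    abel
  refine ⟨?_, ?_⟩
  · rw [hPlemelj, key]
    noncomm_ring
  · rw [key]
    noncomm_ring
end

section
/- Let A be a unital (not necessarily commutative) ring and let C₊, C₋ : A → A be additive maps satisfying C₊(a) = C₋(a) + a for all a ∈ A. Let u⁺, u⁻, m, φ ∈ A satisfy φ = C₊(φu⁻ + m u⁻) + C₋(φu⁺ + m u⁺), and suppose 1 − u⁻ is invertible in A. Define m₊ := m + C₊((φ + m)(u⁺ + u⁻)) and m₋ := m + C₋((φ + m)(u⁺ + u⁻)). Then m₊ = m₋ · (1 − u⁻)⁻¹ (1 + u⁺). -/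
/-- Jump relation: if `C₊, C₋` are additive maps on a unital ring with `C₊ = C₋ + id`,
`φ` solves the singular integral equation `φ = C₊(φu⁻ + mu⁻) + C₋(φu⁺ + mu⁺)`, and `1 - u⁻`
is invertible, then the boundary values `m₊ = m + C₊((φ + m)(u⁺ + u⁻))` and
`m₋ = m + C₋((φ + m)(u⁺ + u⁻))` satisfy `m₊ = m₋ (1 - u⁻)⁻¹ (1 + u⁺)`. -/
theorem jump_relation_of_sie {A : Type*} [Ring A] (Cp Cm : A →+ A)
    (hPlemelj : ∀ a : A, Cp a = Cm a + a)
    (up um m φ : A)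
    (hφ : φ = Cp (φ * um + m * um) + Cm (φ * up + m * up))
    (hu : IsUnit (1 - um)) :
    m + Cp ((φ + m) * (up + um)) =
      (m + Cm ((φ + m) * (up + um))) * Ring.inverse (1 - um) * (1 + up) := by
  have e : (φ + m) * (up + um) = (φ * um + m * um) + (φ * up + m * up) := by noncomm_ring
  have h1 : Cm ((φ + m) * (up + um)) = φ - (φ * um + m * um) := by
    rw [hPlemelj] at hφ
    rw [e, map_add, eq_sub_iff_add_eq]
    refine Eq.trans ?_ hφ.symm
    abel
  have h2 : m + Cm ((φ + m) * (up + um)) = (φ + m) * (1 - um) := by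
    rw [h1]; noncomm_ring
  rw [hPlemelj, ← add_assoc, h2, mul_assoc (φ + m), Ring.mul_inverse_cancel _ hu]
  noncomm_ring
end

section
/- Let ν be a complex measure on ℂ whose pushforward under the map s ↦ −s equals −ν, and let σ₁ denote the 2×2 matrix with entries σ₁(1,2) = σ₁(2,1) = 1 and zeros on the diagonal. Let u : ℂ → M₂(ℂ) be a bounded measurable function with u(−s) = σ₁ u(s) σ₁ for all s, let f : ℂ → ℂ^{1×2} be measurable with s ↦ f(s) integrable with respect to the total variation |ν|, and let k ∈ ℂ and d > 0 be such that |s − k| ≥ d and |s + k| ≥ d for |ν|-almost every s. Then ∫ f(−s) σ₁ u(s) (s − k)⁻¹ dν(s) = ( ∫ f(s) u(s) (s + k)⁻¹ dν(s) ) · σ₁. -/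
open MeasureTheory Matrix

/-- The first Pauli matrix `σ₁`. -/
noncomputable def pauliOne : Matrix (Fin 2) (Fin 2) ℂ := !![0, 1; 1, 0]

/-- Symmetry of the Cauchy kernel under `k ↦ -k`.  A complex measure `ν` on `ℂ` whose
pushforward under `s ↦ -s` is `-ν` is represented by its polar decomposition `dν = w d μ`,
where `μ = |ν|` is the total variation (a positive measure invariant under `s ↦ -s`) and
`w` is a density of modulus one which is odd (`w(-s) = -w(s)` a.e.).  If the jump matrix
satisfies `u(-s) = σ₁ u(s) σ₁` and `f` is a row-vector valued function integrable with
respect to `|ν|`, with `|s - k| ≥ d` and `|s + k| ≥ d` for `|ν|`-a.e. `s`, then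
`∫ f(-s) σ₁ u(s) (s - k)⁻¹ dν(s) = (∫ f(s) u(s) (s + k)⁻¹ dν(s)) σ₁`. -/
theorem cauchy_symmetry (μ : Measure ℂ) (w : ℂ → ℂ) (hw : Measurable w)
    (hμneg : Measure.map (fun s : ℂ => -s) μ = μ)
    (hwodd : ∀ᵐ s ∂μ, w (-s) = -w s)
    (hwmod : ∀ᵐ s ∂μ, ‖w s‖ = 1)
    (u : ℂ → Matrix (Fin 2) (Fin 2) ℂ) (hu : ∀ i j : Fin 2, Measurable fun s => u s i j)
    (hubdd : ∃ Cu : ℝ, ∀ (s : ℂ) (i j : Fin 2), ‖u s i j‖ ≤ Cu)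
    (husym : ∀ s : ℂ, u (-s) = pauliOne * u s * pauliOne)
    (f : ℂ → Fin 2 → ℂ) (hfmeas : Measurable f) (hfint : Integrable f μ)
    (k : ℂ) (d : ℝ) (hd : 0 < d)
    (hdist : ∀ᵐ s ∂μ, d ≤ ‖s - k‖ ∧ d ≤ ‖s + k‖) :
    (∫ s, (w s * (s - k)⁻¹) • ((f (-s)) ᵥ* (pauliOne * u s)) ∂μ) =
      (∫ s, (w s * (s + k)⁻¹) • ((f s) ᵥ* (u s)) ∂μ) ᵥ* pauliOne := by
  have hsq : pauliOne * pauliOne = 1 := by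
    ext i j
    fin_cases i <;> fin_cases j <;> simp [pauliOne, Matrix.mul_apply]
  -- right multiplication by `σ₁` as a continuous linear equivalence
  let e : (Fin 2 → ℂ) ≃ₗ[ℂ] (Fin 2 → ℂ) :=
    LinearEquiv.ofInvolutive (Matrix.vecMulLinear pauliOne) (fun v => by
      simp [Matrix.vecMulLinear_apply, Matrix.vecMul_vecMul, hsq])
  have he : ∀ v, e.toContinuousLinearEquiv v = v ᵥ* pauliOne := fun v => rfl
  have hmp : MeasurePreserving (MeasurableEquiv.neg ℂ) μ μ := ⟨measurable_neg, hμneg⟩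
  rw [← hmp.integral_comp', ← he, ← ContinuousLinearEquiv.integral_comp_comm]
  refine integral_congr_ae ?_
  filter_upwards [hwodd] with s hs
  have h1 : (-s - k)⁻¹ = -(s + k)⁻¹ := by
    rw [← inv_neg]; congr 1; ring
  have h2 : pauliOne * (pauliOne * u s * pauliOne) = u s * pauliOne := by
    rw [← Matrix.mul_assoc, ← Matrix.mul_assoc, hsq, Matrix.one_mul]
  simp only [MeasurableEquiv.neg_apply, he, neg_neg, hs, h1, husym, h2, neg_mul_neg,
    Matrix.smul_vecMul, Matrix.vecMul_vecMul]
end
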